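/- Let 0 < α < 2 and β > α be real numbers with β − α not equal to a nonpositive integer shifted pole configuration, i.e. β > α so that Γ(β − α) > 0. Then Γ(β − α) · x · E_{α,β}(−x) → 1 as x → ∞ (x real, x > 0). In other words, the scaled function 𝔈_{α,β}(x) = Γ(β − α) x E_{α,β}(−x) has asymptotic value 1 at infinity. -/

import Mathlib

/-!
With `b = β - α`, the functional equation `E_{α,b}(-x) = 1 / Γ(b) - x E_{α,β}(-x)` reduces the
claim to `E_{α,b}(-x) → 0`. For `φ(s) = 1 / Γ(α s + b)`, moving the line of integration of
`∫ x^s φ(s) / sin (π s) ds` from `Re s = -1/2` to the right past the poles `0, 1, 2, …` collects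
the terms of the series `∑ φ(k) (-x)^k`, so that `E_{α,b}(-x)` equals an integral over
`Re s = -1/2`, which is visibly `O(x^{-1/2})`. The integrals converge because `1 / sin (π s)` decays
like `exp (-π |Im s|)` while `φ` grows at most like `exp (c α |Im s|)` for any `c > π / 2`: this is
where `α < 2` enters. The growth rate of `1 / Γ` comes from `|B(u, v)| ≤ B(Re u, Re v)` with
`Re u = 1/2` and `v` real, because `|Γ(1/2 + iτ)|² = π / cosh (π τ)`.
-/

open Complex Filter MeasureTheory Set
open scoped ComplexConjugate Real Topology

theorem norm_betaIntegral_le {u v : ℂ} (hu : 0 < u.re) (hv : 0 < v.re) :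
    ‖betaIntegral u v‖ ≤ ProbabilityTheory.beta u.re v.re := by
  have hreal : betaIntegral u.re v.re =
      ↑(∫ x : ℝ in 0..1, ‖(x : ℂ) ^ (u - 1) * (1 - (x : ℂ)) ^ (v - 1)‖) := by
    rw [betaIntegral, ← intervalIntegral.integral_ofReal]
    refine intervalIntegral.integral_congr_Ioo_of_le zero_le_one fun x hx ↦ ?_
    have hx' : 0 < 1 - x := sub_pos.2 hx.2
    have hcast : (1 - x : ℂ) = (1 - x : ℝ) := by push_cast; rfl
    rw [hcast, norm_mul, norm_cpow_eq_rpow_re_of_pos hx.1, norm_cpow_eq_rpow_re_of_pos hx',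
      ofReal_mul, ofReal_cpow hx.1.le, ofReal_cpow hx'.le]
    simp
  rw [ProbabilityTheory.beta_eq_betaIntegralReal _ _ hu hv, hreal, ofReal_re]
  exact intervalIntegral.norm_integral_le_integral_norm zero_le_one

theorem Gamma_re_mul_norm_Gamma_le {u v : ℂ} (hu : 0 < u.re) (hv : 0 < v.re) :
    Real.Gamma (u.re + v.re) * (‖Gamma u‖ * ‖Gamma v‖) ≤
      Real.Gamma u.re * Real.Gamma v.re * ‖Gamma (u + v)‖ := by
  have hG := Real.Gamma_pos_of_pos (add_pos hu hv)
  have hbeta := norm_betaIntegral_le hu hv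
  rw [ProbabilityTheory.beta, le_div_iff₀ hG] at hbeta
  calc _ = ‖betaIntegral u v‖ * Real.Gamma (u.re + v.re) * ‖Gamma (u + v)‖ := by
        rw [← norm_mul, Gamma_mul_Gamma_eq_betaIntegral hu hv, norm_mul]; ring
    _ ≤ _ := by gcongr

theorem sin_pi_mul_one_half_add_mul_I (t : ℝ) :
    sin (π * (1 / 2 + t * I)) = Real.cosh (π * t) := by
  rw [show (π * (1 / 2 + t * I) : ℂ) = (π * t : ℂ) * I + π / 2 by ring, sin_add_pi_div_two,
    cos_mul_I]
  push_cast; rfl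

theorem sin_pi_mul_neg_one_half_add_mul_I (t : ℝ) :
    sin (π * (-(1 / 2) + t * I)) = -Real.cosh (π * t) := by
  rw [← sin_pi_mul_one_half_add_mul_I, ← sin_sub_pi]
  ring_nf

theorem norm_Gamma_one_half_add_mul_I (τ : ℝ) :
    ‖Gamma (1 / 2 + τ * I)‖ = √(π / Real.cosh (π * τ)) := by
  have hconj : (1 : ℂ) - (1 / 2 + τ * I) = conj (1 / 2 + τ * I) := by
    simp [conj_ofNat]; ring
  have hreflect := Gamma_mul_Gamma_one_sub (1 / 2 + τ * I)
  rw [hconj, Gamma_conj, mul_conj, normSq_eq_norm_sq,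
    sin_pi_mul_one_half_add_mul_I] at hreflect
  rw [← Real.sqrt_sq (norm_nonneg (Gamma _))]
  congr 1
  exact_mod_cast hreflect

theorem Gamma_re_le_norm_Gamma_mul_sqrt_cosh {z : ℂ} (hz : 1 / 2 < z.re) :
    Real.Gamma z.re ≤ ‖Gamma z‖ * √(Real.cosh (π * z.im)) := by
  set w : ℂ := ((z.re - 1 / 2 : ℝ) : ℂ) with hw
  have hw0 : 0 < w.re := by simpa [hw] using hz
  have hzw : 1 / 2 + z.im * I + w = z := by
    apply Complex.ext <;> simp [hw]
  have hmono := Gamma_re_mul_norm_Gamma_le (u := 1 / 2 + z.im * I) (by simp) hw0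
  have hGw : ‖Gamma w‖ = Real.Gamma w.re := by
    rw [hw, Gamma_ofReal, norm_real, ofReal_re,
      Real.norm_of_nonneg (Real.Gamma_pos_of_pos (by simpa [hw] using hw0)).le]
  have hre : (1 / 2 + z.im * I : ℂ).re = 1 / 2 := by simp
  rw [← add_re, hzw, hre, hGw, norm_Gamma_one_half_add_mul_I, Real.Gamma_one_half_eq,
    Real.sqrt_div Real.pi_pos.le] at hmono
  have hpi := Real.sqrt_pos.2 Real.pi_pos
  have hG := Real.Gamma_pos_of_pos hw0
  refine le_of_mul_le_mul_right ?_ (mul_pos hpi hG)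
  calc Real.Gamma z.re * (√π * Real.Gamma w.re)
      = Real.Gamma z.re * (√π / √(Real.cosh (π * z.im)) * Real.Gamma w.re) *
          √(Real.cosh (π * z.im)) := by field_simp
    _ ≤ √π * Real.Gamma w.re * ‖Gamma z‖ * √(Real.cosh (π * z.im)) := by gcongr
    _ = _ := by ring

theorem cosh_le_exp_abs (u : ℝ) : Real.cosh u ≤ Real.exp |u| := by
  rw [← Real.cosh_abs, ← Real.cosh_add_sinh]
  exact le_add_of_nonneg_right (Real.sinh_nonneg_iff.2 (abs_nonneg u))

theorem rpow_mul_exp_neg_le_Gamma {s M : ℝ} (hs : 1 ≤ s) (hM : 0 < M) :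
    M ^ (s - 1) * Real.exp (-M) ≤ Real.Gamma s := by
  have hint := Real.GammaIntegral_convergent (one_pos.trans_le hs)
  have hsub : Ioi M ⊆ Ioi 0 := Ioi_subset_Ioi hM.le
  calc M ^ (s - 1) * Real.exp (-M) = ∫ t in Ioi M, Real.exp (-t) * M ^ (s - 1) := by
        rw [integral_mul_const, integral_exp_neg_Ioi, mul_comm]
    _ ≤ ∫ t in Ioi M, Real.exp (-t) * t ^ (s - 1) := by
        refine setIntegral_mono_on ((integrableOn_exp_neg_Ioi M).mul_const _)
          (hint.mono_set hsub) measurableSet_Ioi fun t (ht : M < t) ↦ ?_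
        gcongr
    _ ≤ ∫ t in Ioi 0, Real.exp (-t) * t ^ (s - 1) := by
        refine setIntegral_mono_set hint ?_ (Eventually.of_forall hsub)
        filter_upwards [self_mem_ae_restrict measurableSet_Ioi] with t (ht : 0 < t)
        simp only [Pi.zero_apply]
        positivity
    _ = Real.Gamma s := (Real.Gamma_eq_integral (one_pos.trans_le hs)).symm

theorem norm_inv_Gamma_le {z : ℂ} (hz : 1 ≤ z.re) {M : ℝ} (hM : 0 < M) :
    ‖(Gamma z)⁻¹‖ ≤ M * Real.exp M * M ^ (-z.re) * Real.exp (π / 2 * |z.im|) := by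
  have hcosh : √(Real.cosh (π * z.im)) ≤ Real.exp (π / 2 * |z.im|) := by
    rw [Real.sqrt_le_left (Real.exp_pos _).le, ← Real.exp_nat_mul]
    convert! cosh_le_exp_abs (π * z.im) using 2
    rw [abs_mul, abs_of_pos Real.pi_pos]; push_cast; ring
  have hlow : M ^ (z.re - 1) * Real.exp (-M) ≤ ‖Gamma z‖ * Real.exp (π / 2 * |z.im|) :=
    calc _ ≤ Real.Gamma z.re := rpow_mul_exp_neg_le_Gamma hz hM
      _ ≤ ‖Gamma z‖ * √(Real.cosh (π * z.im)) :=
        Gamma_re_le_norm_Gamma_mul_sqrt_cosh (by linarith)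
      _ ≤ _ := by gcongr
  have hG : 0 < ‖Gamma z‖ := norm_pos_iff.2 (Gamma_ne_zero_of_re_pos (by linarith))
  rw [norm_inv, inv_le_iff_one_le_mul₀ hG]
  calc 1 = M * Real.exp M * M ^ (-z.re) * (M ^ (z.re - 1) * Real.exp (-M)) := by
        rw [Real.rpow_sub_one hM.ne', Real.rpow_neg hM.le, Real.exp_neg]
        field_simp
    _ ≤ M * Real.exp M * M ^ (-z.re) * (‖Gamma z‖ * Real.exp (π / 2 * |z.im|)) := by gcongr
    _ = _ := by ring

/-- `SuperexponentialDecay κ φ`: in every right half-plane, `φ` is `O(M ^ (-Re s))` for every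
`M > 0`, up to a factor growing with exponential rate `κ` in the vertical direction. This is the
growth condition under which the series `∑ φ(k) z ^ k` converges everywhere and, when `κ < π`, has
a Mellin–Barnes representation. -/
def SuperexponentialDecay (κ : ℝ) (φ : ℂ → ℂ) : Prop :=
  ∀ σ₀ M : ℝ, 0 < M → ∃ K, 0 ≤ K ∧
    ∀ s : ℂ, σ₀ ≤ s.re → ‖φ s‖ ≤ K * M ^ (-s.re) * Real.exp (κ * |s.im|)

namespace SuperexponentialDecay

variable {κ : ℝ} {φ : ℂ → ℂ}

theorem exists_norm_le (hφ : SuperexponentialDecay κ φ) (σ₀ : ℝ) :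
    ∃ K, 0 ≤ K ∧ ∀ s : ℂ, σ₀ ≤ s.re → ‖φ s‖ ≤ K * Real.exp (κ * |s.im|) := by
  simpa using hφ σ₀ 1 one_pos

theorem summable (hφ : SuperexponentialDecay κ φ) (z : ℂ) :
    Summable fun k : ℕ ↦ z ^ k * φ k := by
  have hM : 0 < ‖z‖ + 1 := by positivity
  obtain ⟨K, -, hK⟩ := hφ 0 _ hM
  have hratio : ‖z‖ / (‖z‖ + 1) < 1 := (div_lt_one hM).2 (lt_add_one _)
  refine .of_norm_bounded ((summable_geometric_of_lt_one (by positivity) hratio).mul_left K)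
    fun k ↦ ?_
  have hk := hK k (by simp)
  simp only [natCast_re, natCast_im, abs_zero, mul_zero, Real.exp_zero, mul_one,
    Real.rpow_neg hM.le, Real.rpow_natCast] at hk
  calc ‖z ^ k * φ k‖ ≤ ‖z‖ ^ k * (K * ((‖z‖ + 1) ^ k)⁻¹) := by
        rw [norm_mul, norm_pow]; gcongr
    _ = K * (‖z‖ / (‖z‖ + 1)) ^ k := by rw [div_pow]; ring

theorem cpow_mul (hφ : SuperexponentialDecay κ φ) {x : ℝ} (hx : 0 < x) :
    SuperexponentialDecay κ fun s ↦ (x : ℂ) ^ s * φ s := by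
  intro σ₀ M hM
  obtain ⟨K, hK0, hK⟩ := hφ σ₀ (x * M) (by positivity)
  refine ⟨K, hK0, fun s hs ↦ ?_⟩
  rw [norm_mul, norm_cpow_eq_rpow_re_of_pos hx]
  calc x ^ s.re * ‖φ s‖
      ≤ x ^ s.re * (K * (x * M) ^ (-s.re) * Real.exp (κ * |s.im|)) := by gcongr; exact hK s hs
    _ = K * M ^ (-s.re) * Real.exp (κ * |s.im|) := by
        rw [Real.mul_rpow hx.le hM.le, Real.rpow_neg hx.le]
        field_simp

theorem comp_mul_add (hφ : SuperexponentialDecay κ φ) {α : ℝ} (hα : 0 < α) (β : ℂ) :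
    SuperexponentialDecay (κ * α) fun s ↦ φ (α * s + β) := by
  intro σ₀ M hM
  set m : ℝ := M ^ α⁻¹
  have hm : 0 < m := by positivity
  obtain ⟨K, hK0, hK⟩ := hφ (α * σ₀ + β.re) m hm
  refine ⟨K * m ^ (-β.re) * Real.exp (|κ| * |β.im|), by positivity, fun s hs ↦ ?_⟩
  have hre : (α * s + β).re = α * s.re + β.re := by simp
  have him : (α * s + β).im = α * s.im + β.im := by simp
  have hpow : m ^ (-(α * s.re + β.re)) = m ^ (-β.re) * M ^ (-s.re) := by
    rw [neg_add, Real.rpow_add hm, ← Real.rpow_mul hM.le, mul_comm]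
    congr 2
    field_simp
  have hexp : κ * |α * s.im + β.im| ≤ |κ| * |β.im| + κ * α * |s.im| := by
    have hdiff : |α * s.im + β.im| - |α * s.im| ∈ Icc (-|β.im|) |β.im| :=
      abs_le.1 (by simpa using abs_abs_sub_abs_le (α * s.im + β.im) (α * s.im))
    rw [abs_mul, abs_of_pos hα] at hdiff
    rcases abs_cases κ with ⟨h, h'⟩ | ⟨h, h'⟩ <;> rw [h] <;> nlinarith [hdiff.1, hdiff.2]
  calc ‖φ (α * s + β)‖ ≤ K * m ^ (-(α * s.re + β.re)) * Real.exp (κ * |α * s.im + β.im|) := by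
        have h := hK (α * s + β) (by rw [hre]; gcongr)
        rwa [hre, him] at h
    _ ≤ K * (m ^ (-β.re) * M ^ (-s.re)) *
          (Real.exp (|κ| * |β.im|) * Real.exp (κ * α * |s.im|)) := by
        rw [hpow, ← Real.exp_add]; gcongr
    _ = _ := by ring

end SuperexponentialDecay

theorem norm_le_mul_exp_mul_abs_im {z : ℂ} {R ε : ℝ} (hz : |z.re| ≤ R) (hε : 0 < ε) :
    ‖z‖ ≤ (R + ε⁻¹) * Real.exp (ε * |z.im|) := by
  have hR : 0 ≤ R := (abs_nonneg _).trans hz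
  have hone : 1 ≤ Real.exp (ε * |z.im|) := Real.one_le_exp (by positivity)
  have hlin : ε * |z.im| ≤ Real.exp (ε * |z.im|) := by
    linarith [Real.add_one_le_exp (ε * |z.im|)]
  calc ‖z‖ ≤ R * 1 + ε⁻¹ * (ε * |z.im|) := by
        rw [inv_mul_cancel_left₀ hε.ne']
        linarith [norm_le_abs_re_add_abs_im z]
    _ ≤ R * Real.exp (ε * |z.im|) + ε⁻¹ * Real.exp (ε * |z.im|) := by gcongr
    _ = _ := by ring

theorem exists_norm_inv_Gamma_le (n : ℕ) {c M : ℝ} (hc : π / 2 < c) (hM : 0 < M) :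
    ∃ K, 0 ≤ K ∧ ∀ z : ℂ, 1 - n ≤ z.re →
      ‖(Gamma z)⁻¹‖ ≤ K * M ^ (-z.re) * Real.exp (c * |z.im|) := by
  induction n generalizing c with
  | zero =>
    refine ⟨M * Real.exp M, by positivity, fun z hz ↦ ?_⟩
    refine (norm_inv_Gamma_le (by simpa using hz) hM).trans ?_
    gcongr
  | succ n ih =>
    obtain ⟨c', hc', hcc'⟩ := exists_between hc
    obtain ⟨K, hK0, hK⟩ := ih hc'
    set L : ℝ := n + 1 + (c - c')⁻¹
    have hε : 0 < c - c' := sub_pos.2 hcc'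
    refine ⟨max K (L * K / M), le_max_of_le_left hK0, fun z hz ↦ ?_⟩
    push_cast at hz
    rcases le_or_gt (1 - n : ℝ) z.re with hright | hleft
    · refine (hK z hright).trans ?_
      gcongr
      exact le_max_left _ _
    · have hre : |z.re| ≤ n + 1 := abs_le.2 ⟨by linarith, by linarith⟩
      have hnext := hK (z + 1) (by rw [add_re, one_re]; linarith)
      simp only [add_re, one_re, add_im, one_im, add_zero, neg_add] at hnext
      calc ‖(Gamma z)⁻¹‖ = ‖z‖ * ‖(Gamma (z + 1))⁻¹‖ := by
            rw [one_div_Gamma_eq_self_mul_one_div_Gamma_add_one, norm_mul]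
        _ ≤ L * Real.exp ((c - c') * |z.im|) *
              (K * M ^ (-z.re + -1) * Real.exp (c' * |z.im|)) := by
            gcongr
            exact norm_le_mul_exp_mul_abs_im hre hε
        _ = L * K / M * M ^ (-z.re) * Real.exp (c * |z.im|) := by
            rw [Real.rpow_add hM, Real.rpow_neg_one,
              show c * |z.im| = (c - c') * |z.im| + c' * |z.im| by ring, Real.exp_add]
            ring
        _ ≤ _ := by gcongr; exact le_max_right _ _

theorem superexponentialDecay_inv_Gamma {c : ℝ} (hc : π / 2 < c) :
    SuperexponentialDecay c fun z ↦ (Gamma z)⁻¹ := by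
  intro σ₀ M hM
  obtain ⟨K, hK0, hK⟩ := exists_norm_inv_Gamma_le ⌈1 - σ₀⌉₊ hc hM
  exact ⟨K, hK0, fun z hz ↦ hK z (by linarith [Nat.le_ceil (1 - σ₀)])⟩

theorem integrable_exp_neg_mul_abs {a : ℝ} (ha : 0 < a) :
    Integrable fun t : ℝ ↦ Real.exp (-a * |t|) := by
  rw [← integrableOn_univ, ← Iic_union_Ioi (a := (0 : ℝ))]
  refine .union ?_ ?_
  · refine (integrableOn_exp_mul_Iic ha 0).congr_fun (fun t ht ↦ ?_) measurableSet_Iic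
    simp only [abs_of_nonpos (mem_Iic.1 ht), neg_mul_neg]
  · refine (integrableOn_exp_mul_Ioi (neg_lt_zero.2 ha) 0).congr_fun (fun t ht ↦ ?_)
      measurableSet_Ioi
    simp only [abs_of_pos (mem_Ioi.1 ht)]

theorem integrable_exp_mul_abs_div_cosh {κ : ℝ} (hκ : κ < π) :
    Integrable fun t : ℝ ↦ Real.exp (κ * |t|) / Real.cosh (π * t) := by
  refine ((integrable_exp_neg_mul_abs (sub_pos.2 hκ)).const_mul 2).mono'
    (Continuous.aestronglyMeasurable ?_) (Eventually.of_forall fun t ↦ ?_)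
  · exact Continuous.div (by fun_prop) (by fun_prop) fun t ↦ (Real.cosh_pos _).ne'
  have hcosh : Real.exp (π * |t|) / 2 ≤ Real.cosh (π * t) := by
    rw [← Real.cosh_abs, abs_mul, abs_of_pos Real.pi_pos, Real.cosh_eq]
    linarith [Real.exp_pos (-(π * |t|))]
  rw [Real.norm_of_nonneg (div_pos (Real.exp_pos _) (Real.cosh_pos _)).le,
    div_le_iff₀ (Real.cosh_pos _)]
  calc Real.exp (κ * |t|) = 2 * Real.exp (-(π - κ) * |t|) * (Real.exp (π * |t|) / 2) := by
        rw [show κ * |t| = -(π - κ) * |t| + π * |t| by ring, Real.exp_add]; ring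
    _ ≤ _ := by gcongr

theorem integral_inv_cosh_pi_mul : ∫ t : ℝ, (Real.cosh (π * t))⁻¹ = 1 := by
  have hderiv (t : ℝ) : HasDerivAt (fun t ↦ Real.arctan (Real.sinh (π * t)) / π)
      (Real.cosh (π * t))⁻¹ t := by
    convert! ((((hasDerivAt_id t).const_mul π).sinh).arctan).div_const π using 1
    have := (Real.cosh_pos (π * t)).ne'
    have := Real.pi_ne_zero
    simp only [id, ← Real.cosh_sq']
    field_simp
  have hint : Integrable fun t : ℝ ↦ (Real.cosh (π * t))⁻¹ := by
    simpa using integrable_exp_mul_abs_div_cosh Real.pi_pos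
  have htop : Tendsto (fun t : ℝ ↦ Real.arctan (Real.sinh (π * t)) / π) atTop (𝓝 (π / 2 / π)) :=
    ((tendsto_nhds_of_tendsto_nhdsWithin Real.tendsto_arctan_atTop).comp
      (Real.sinhOrderIso.tendsto_atTop.comp
        (tendsto_id.const_mul_atTop Real.pi_pos))).div_const π
  have hbot : Tendsto (fun t : ℝ ↦ Real.arctan (Real.sinh (π * t)) / π) atBot
      (𝓝 (-(π / 2) / π)) :=
    ((tendsto_nhds_of_tendsto_nhdsWithin Real.tendsto_arctan_atBot).comp
      (Real.sinhOrderIso.tendsto_atBot.comp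
        (tendsto_id.const_mul_atBot Real.pi_pos))).div_const π
  rw [integral_of_hasDerivAt_of_tendsto hderiv hint hbot htop]
  field_simp
  norm_num

/-- The integral of `h` along the vertical line `Re s = σ` against the weight `1 / cosh (π Im s)`.
When `σ` is half an odd integer the weight is `± 1 / sin (π s)`, so this is a Mellin–Barnes
integral. -/
noncomputable def sechIntegral (h : ℂ → ℂ) (σ : ℝ) : ℂ :=
  ∫ t : ℝ, h (σ + t * I) / Real.cosh (π * t)

section SechIntegral

variable {h : ℂ → ℂ} {κ K σ : ℝ}

theorem norm_div_cosh_le (hb : ∀ t : ℝ, ‖h (σ + t * I)‖ ≤ K * Real.exp (κ * |t|)) (t : ℝ) :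
    ‖h (σ + t * I) / Real.cosh (π * t)‖ ≤ K * (Real.exp (κ * |t|) / Real.cosh (π * t)) := by
  have hcosh := Real.cosh_pos (π * t)
  rw [norm_div, norm_real, Real.norm_of_nonneg hcosh.le, ← mul_div_assoc]
  gcongr
  exact hb t

theorem integrable_div_cosh (hκ : κ < π) (hh : Continuous h)
    (hb : ∀ t : ℝ, ‖h (σ + t * I)‖ ≤ K * Real.exp (κ * |t|)) :
    Integrable fun t : ℝ ↦ h (σ + t * I) / Real.cosh (π * t) := by
  refine ((integrable_exp_mul_abs_div_cosh hκ).const_mul K).mono'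
    (Continuous.aestronglyMeasurable ?_) (Eventually.of_forall (norm_div_cosh_le hb))
  refine Continuous.div (by fun_prop) (by fun_prop) fun t ↦ ?_
  exact ofReal_ne_zero.2 (Real.cosh_pos _).ne'

theorem norm_sechIntegral_le (hκ : κ < π)
    (hb : ∀ t : ℝ, ‖h (σ + t * I)‖ ≤ K * Real.exp (κ * |t|)) :
    ‖sechIntegral h σ‖ ≤ K * ∫ t : ℝ, Real.exp (κ * |t|) / Real.cosh (π * t) := by
  rw [← integral_const_mul]
  exact norm_integral_le_of_norm_le ((integrable_exp_mul_abs_div_cosh hκ).const_mul K)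
    (Eventually.of_forall (norm_div_cosh_le hb))

theorem sechIntegral_sub_const (hκ : κ < π) (hh : Continuous h)
    (hb : ∀ t : ℝ, ‖h (σ + t * I)‖ ≤ K * Real.exp (κ * |t|)) (w : ℂ) :
    sechIntegral (fun s ↦ h s - w) σ = sechIntegral h σ - w := by
  have hconst : Integrable fun t : ℝ ↦ w / Real.cosh (π * t) :=
    integrable_div_cosh (h := fun _ ↦ w) (σ := σ) (K := ‖w‖) Real.pi_pos continuous_const (by simp)
  have hw : ∫ t : ℝ, w / Real.cosh (π * t) = w := by
    simp_rw [div_eq_mul_inv, ← ofReal_inv]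
    rw [integral_const_mul, integral_complex_ofReal, integral_inv_cosh_pi_mul, ofReal_one, mul_one]
  simp only [sechIntegral, sub_div]
  rw [integral_sub (integrable_div_cosh hκ hh hb) hconst, hw]

end SechIntegral

theorem tendsto_integral_horizontal {E : Type*} [NormedAddCommGroup E] [NormedSpace ℝ E]
    {f : ℂ → E} {a b : ℝ} {g : ℝ → ℝ} (hg : Tendsto g atTop (𝓝 0))
    (hfg : ∀ s : ℂ, s.re ∈ uIcc a b → 1 ≤ |s.im| → ‖f s‖ ≤ g |s.im|) :
    Tendsto (fun T : ℝ ↦ ∫ x : ℝ in a..b, f (x + T * I)) (comap (|·|) atTop) (𝓝 0) := by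
  have hg' : Tendsto (fun T : ℝ ↦ g |T| * |b - a|) (comap (|·|) atTop) (𝓝 0) := by
    have := (hg.comp (tendsto_comap (f := fun T : ℝ ↦ |T|))).mul_const |b - a|
    rwa [zero_mul] at this
  refine squeeze_zero_norm' ?_ hg'
  filter_upwards [tendsto_comap.eventually (eventually_ge_atTop 1)] with T hT
  refine intervalIntegral.norm_integral_le_of_norm_le_const fun x hx ↦ ?_
  simpa using hfg (x + T * I) (by simpa using uIoc_subset_uIcc hx) (by simpa using hT)

theorem integral_vertical_eq_of_differentiableOn {E : Type*} [NormedAddCommGroup E]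
    [NormedSpace ℂ E] [CompleteSpace E] {f : ℂ → E} {a b : ℝ} {g : ℝ → ℝ}
    (hf : DifferentiableOn ℂ f (re ⁻¹' uIcc a b))
    (ha : Integrable fun t : ℝ ↦ f (a + t * I)) (hb : Integrable fun t : ℝ ↦ f (b + t * I))
    (hg : Tendsto g atTop (𝓝 0))
    (hfg : ∀ s : ℂ, s.re ∈ uIcc a b → 1 ≤ |s.im| → ‖f s‖ ≤ g |s.im|) :
    ∫ t : ℝ, f (a + t * I) = ∫ t : ℝ, f (b + t * I) := by
  have hrect (T : ℝ) : (∫ x : ℝ in a..b, f (x + (-T : ℝ) * I)) - (∫ x : ℝ in a..b, f (x + T * I)) +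
      I • (∫ t : ℝ in -T..T, f (b + t * I)) - I • (∫ t : ℝ in -T..T, f (a + t * I)) = 0 := by
    simpa using integral_boundary_rect_eq_zero_of_differentiableOn f ⟨a, -T⟩ ⟨b, T⟩
      (hf.mono inter_subset_left)
  have hhor := tendsto_integral_horizontal hg hfg
  have htop := hhor.comp (tendsto_comap_iff.2 tendsto_abs_atTop_atTop)
  have hbot := hhor.comp
    (tendsto_comap_iff.2 (tendsto_abs_atBot_atTop.comp tendsto_neg_atTop_atBot))
  have hvert {c : ℝ} (hc : Integrable fun t : ℝ ↦ f (c + t * I)) :=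
    (intervalIntegral_tendsto_integral hc tendsto_neg_atTop_atBot tendsto_id).const_smul I
  have hlim := ((hbot.sub htop).add (hvert hb)).sub (hvert ha)
  have hzero := tendsto_nhds_unique (hlim.congr hrect) tendsto_const_nhds
  rw [sub_zero, zero_add, sub_eq_zero] at hzero
  exact (smul_right_injective E I_ne_zero hzero).symm

theorem dslope_div_dslope {𝕜 : Type*} [NontriviallyNormedField 𝕜] {f g : 𝕜 → 𝕜} {a s : 𝕜}
    (hf : f a = 0) (hg : g a = 0) (hs : s ≠ a) : dslope f a s / dslope g a s = f s / g s := by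
  rw [dslope_of_ne _ hs, dslope_of_ne _ hs, slope_def_field, slope_def_field, hf, hg, sub_zero,
    sub_zero, div_div_div_cancel_right₀ (sub_ne_zero.2 hs)]

theorem dslope_sin_pi_mul_ne_zero {s : ℂ} (hs : |s.re| < 1) :
    dslope (fun s : ℂ ↦ sin (π * s)) 0 s ≠ 0 := by
  have hpi : (π : ℂ) ≠ 0 := ofReal_ne_zero.2 Real.pi_ne_zero
  rcases eq_or_ne s 0 with rfl | hs0
  · have hderiv : HasDerivAt (fun s : ℂ ↦ sin (π * s)) π 0 := by
      simpa using ((hasDerivAt_id (0 : ℂ)).const_mul (π : ℂ)).csin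
    rwa [dslope_same, hderiv.deriv]
  · rw [dslope_of_ne _ hs0, slope_def_field, mul_zero, sin_zero, sub_zero, sub_zero]
    refine div_ne_zero (fun hsin ↦ hs0 ?_) hs0
    obtain ⟨k, hk⟩ := sin_eq_zero_iff.1 hsin
    obtain rfl : s = k := mul_left_cancel₀ hpi (hk.trans (mul_comm _ _))
    rw [intCast_re] at hs
    have hk0 : k = 0 := Int.abs_lt_one_iff.1 (by exact_mod_cast hs)
    rw [hk0, Int.cast_zero]

theorem exp_div_four_le_norm_sin_pi_mul {s : ℂ} (hs : 1 ≤ |s.im|) :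
    Real.exp (π * |s.im|) / 4 ≤ ‖sin (π * s)‖ := by
  have hnorm : |Real.sinh (π * s.im)| ≤ ‖sin (π * s)‖ := by
    have hsplit : (π * s : ℂ) = (π * s.re : ℝ) + (π * s.im : ℝ) * I := by
      apply Complex.ext <;> simp
    rw [hsplit, sin_add_mul_I, ← ofReal_sin, ← ofReal_cos, ← ofReal_sinh, ← ofReal_cosh,
      ← ofReal_mul, ← ofReal_mul, norm_add_mul_I]
    apply Real.abs_le_sqrt
    rw [mul_pow, mul_pow, Real.cosh_sq]
    nlinarith [Real.sin_sq_add_cos_sq (π * s.re), sq_nonneg (Real.sin (π * s.re))]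
  refine le_trans ?_ hnorm
  have hlarge : 1 ≤ π * |s.im| := by nlinarith [Real.pi_gt_three]
  have hsmall : Real.exp (-(π * |s.im|)) ≤ 1 := Real.exp_le_one_iff.2 (by linarith)
  rw [Real.abs_sinh, abs_mul, abs_of_pos Real.pi_pos, Real.sinh_eq]
  linarith [Real.add_one_le_exp (π * |s.im|)]

theorem exists_differentiableOn_eq_div_sin_pi_mul {h : ℂ → ℂ} (hd : Differentiable ℂ h)
    (h0 : h 0 = 0) :
    ∃ Q : ℂ → ℂ, DifferentiableOn ℂ Q {s | |s.re| < 1} ∧ ∀ s ≠ 0, Q s = h s / sin (π * s) := by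
  have hdslope {f : ℂ → ℂ} (hf : Differentiable ℂ f) : Differentiable ℂ (dslope f 0) :=
    differentiableOn_univ.1 ((differentiableOn_dslope univ_mem).2 hf.differentiableOn)
  refine ⟨fun s ↦ dslope h 0 s / dslope (fun s ↦ sin (π * s)) 0 s, fun s hs ↦ ?_, fun s hs ↦ ?_⟩
  · exact ((hdslope hd s).div (hdslope (by fun_prop) s)
      (dslope_sin_pi_mul_ne_zero hs)).differentiableWithinAt
  · exact dslope_div_dslope h0 (by simp) hs

theorem norm_div_sin_pi_mul_le {w s : ℂ} {κ K : ℝ} (hw : ‖w‖ ≤ K * Real.exp (κ * |s.im|))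
    (hs : 1 ≤ |s.im|) : ‖w / sin (π * s)‖ ≤ 4 * K * Real.exp (-((π - κ) * |s.im|)) := by
  rw [norm_div]
  calc ‖w‖ / ‖sin (π * s)‖ ≤ K * Real.exp (κ * |s.im|) / (Real.exp (π * |s.im|) / 4) :=
        div_le_div₀ ((norm_nonneg _).trans hw) hw (by positivity)
          (exp_div_four_le_norm_sin_pi_mul hs)
    _ = _ := by
        rw [show -((π - κ) * |s.im|) = κ * |s.im| - π * |s.im| by ring, Real.exp_sub]
        field_simp

theorem sechIntegral_add_sechIntegral_of_apply_zero {h : ℂ → ℂ} {κ K : ℝ} (hκ : κ < π)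
    (hd : Differentiable ℂ h)
    (hb : ∀ s : ℂ, |s.re| ≤ 1 / 2 → ‖h s‖ ≤ K * Real.exp (κ * |s.im|)) (h0 : h 0 = 0) :
    sechIntegral h (-(1 / 2)) + sechIntegral h (1 / 2) = 0 := by
  obtain ⟨Q, hQd, hQ⟩ := exists_differentiableOn_eq_div_sin_pi_mul hd h0
  have hstrip {s : ℂ} (hs : s.re ∈ uIcc (-(1 / 2)) (1 / 2)) : |s.re| ≤ 1 / 2 := by
    rw [uIcc_of_le (by norm_num)] at hs
    exact abs_le.2 hs
  have hQl (t : ℝ) : Q ((-(1 / 2) : ℝ) + t * I) =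
      -(h ((-(1 / 2) : ℝ) + t * I) / Real.cosh (π * t)) := by
    rw [hQ _ fun hz ↦ by simpa using congrArg re hz]
    push_cast
    rw [sin_pi_mul_neg_one_half_add_mul_I, div_neg, ofReal_cosh, ofReal_mul]
  have hQr (t : ℝ) : Q ((1 / 2 : ℝ) + t * I) = h ((1 / 2 : ℝ) + t * I) / Real.cosh (π * t) := by
    rw [hQ _ fun hz ↦ by simpa using congrArg re hz]
    push_cast
    rw [sin_pi_mul_one_half_add_mul_I, ofReal_cosh, ofReal_mul]
  have hint {σ : ℝ} (hσ : |σ| ≤ 1 / 2) :=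
    integrable_div_cosh (σ := σ) hκ hd.continuous fun t ↦ by
      simpa using hb (σ + t * I) (by simpa using hσ)
  have hdecay : Tendsto (fun T : ℝ ↦ 4 * K * Real.exp (-((π - κ) * T))) atTop (𝓝 0) := by
    simpa using (Real.tendsto_exp_neg_atTop_nhds_zero.comp
      (tendsto_id.const_mul_atTop (sub_pos.2 hκ))).const_mul (4 * K)
  have hshift := integral_vertical_eq_of_differentiableOn
    (hQd.mono fun s hs ↦ (hstrip hs).trans_lt (by norm_num))
    ((hint (by norm_num)).neg.congr (.of_forall fun t ↦ (hQl t).symm))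
    ((hint (by norm_num)).congr (.of_forall fun t ↦ (hQr t).symm)) hdecay fun s hs him ↦ by
      rw [hQ s (by rintro rfl; norm_num at him)]
      exact norm_div_sin_pi_mul_le (hb s (hstrip hs)) him
  simp only [hQl, hQr, integral_neg] at hshift
  rw [sechIntegral, sechIntegral, ← hshift, add_neg_cancel]

theorem sechIntegral_add_sechIntegral {h : ℂ → ℂ} {κ K : ℝ} (hκ0 : 0 ≤ κ) (hκ : κ < π)
    (hd : Differentiable ℂ h)
    (hb : ∀ s : ℂ, |s.re| ≤ 1 / 2 → ‖h s‖ ≤ K * Real.exp (κ * |s.im|)) :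
    sechIntegral h (-(1 / 2)) + sechIntegral h (1 / 2) = 2 * h 0 := by
  have hsub := sechIntegral_add_sechIntegral_of_apply_zero (h := fun s ↦ h s - h 0)
    (K := K + ‖h 0‖) hκ (hd.sub_const _) (fun s hs ↦ ?_) (sub_self _)
  · have hline {σ : ℝ} (hσ : |σ| ≤ 1 / 2) := sechIntegral_sub_const (σ := σ) hκ hd.continuous
      (fun t ↦ by simpa using hb (σ + t * I) (by simpa using hσ)) (h 0)
    rw [hline (by norm_num), hline (by norm_num)] at hsub
    linear_combination hsub
  · have hexp : 1 ≤ Real.exp (κ * |s.im|) := Real.one_le_exp (by positivity)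
    calc ‖h s - h 0‖ ≤ ‖h s‖ + ‖h 0‖ * 1 := by simpa using norm_sub_le (h s) (h 0)
      _ ≤ K * Real.exp (κ * |s.im|) + ‖h 0‖ * Real.exp (κ * |s.im|) := by
          gcongr
          exact hb s hs
      _ = _ := by ring

theorem sechIntegral_comp_add (h : ℂ → ℂ) (c σ : ℝ) :
    sechIntegral (fun s ↦ h (s + c)) σ = sechIntegral h (σ + c) := by
  simp only [sechIntegral, ofReal_add, add_right_comm]

namespace SuperexponentialDecay

variable {κ : ℝ} {G φ : ℂ → ℂ}

theorem sechIntegral_add_sechIntegral (hG : SuperexponentialDecay κ G) (hκ0 : 0 ≤ κ)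
    (hκ : κ < π) (hd : Differentiable ℂ G) (c : ℝ) :
    sechIntegral G (-(1 / 2) + c) + sechIntegral G (1 / 2 + c) = 2 * G c := by
  obtain ⟨K, -, hK⟩ := hG.exists_norm_le (-(1 / 2) + c)
  have hshift := _root_.sechIntegral_add_sechIntegral (h := fun s ↦ G (s + c)) (K := K) hκ0 hκ
    (by fun_prop) fun s hs ↦ by simpa using hK (s + c) (by simpa using (abs_le.1 hs).1)
  simpa only [sechIntegral_comp_add, zero_add] using hshift

theorem tendsto_sechIntegral (hG : SuperexponentialDecay κ G) (hκ : κ < π) :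
    Tendsto (sechIntegral G) atTop (𝓝 0) := by
  obtain ⟨K, -, hK⟩ := hG 0 2 two_pos
  set W := ∫ t : ℝ, Real.exp (κ * |t|) / Real.cosh (π * t)
  have hdecay : Tendsto (fun σ : ℝ ↦ K * 2 ^ (-σ) * W) atTop (𝓝 0) := by
    simpa [Real.rpow_neg, ← Real.inv_rpow] using
      ((tendsto_rpow_atTop_of_base_lt_one (2⁻¹ : ℝ) (by norm_num) (by norm_num)).const_mul
        K).mul_const W
  refine squeeze_zero_norm' ?_ hdecay
  filter_upwards [eventually_ge_atTop 0] with σ hσ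
  exact norm_sechIntegral_le hκ fun t ↦ by simpa using hK (σ + t * I) (by simpa using hσ)

theorem sechIntegral_neg_one_half_eq (hG : SuperexponentialDecay κ G) (hκ0 : 0 ≤ κ)
    (hκ : κ < π) (hd : Differentiable ℂ G) (N : ℕ) :
    sechIntegral G (-(1 / 2)) =
      2 * ∑ k ∈ Finset.range N, (-1) ^ k * G k + (-1) ^ N * sechIntegral G (-(1 / 2) + N) := by
  induction N with
  | zero => simp
  | succ N ih =>
    have hstep := hG.sechIntegral_add_sechIntegral hκ0 hκ hd N
    rw [show (1 / 2 + N : ℝ) = -(1 / 2) + (N + 1 : ℕ) by push_cast; ring, ofReal_natCast] at hstep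
    rw [ih, Finset.sum_range_succ, pow_succ]
    linear_combination (-1) ^ N * hstep

theorem hasSum_neg_one_pow_mul (hG : SuperexponentialDecay κ G) (hκ0 : 0 ≤ κ) (hκ : κ < π)
    (hd : Differentiable ℂ G) :
    HasSum (fun k : ℕ ↦ (-1) ^ k * G k) (sechIntegral G (-(1 / 2)) / 2) := by
  have htail : Tendsto (fun N : ℕ ↦ (-1) ^ N * sechIntegral G (-(1 / 2) + N)) atTop (𝓝 0) := by
    have hshift : Tendsto (fun N : ℕ ↦ -(1 / 2) + (N : ℝ)) atTop atTop :=
      tendsto_atTop_add_const_left _ _ tendsto_natCast_atTop_atTop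
    rw [tendsto_zero_iff_norm_tendsto_zero]
    simp only [norm_mul, norm_pow, norm_neg, norm_one, one_pow, one_mul]
    exact tendsto_zero_iff_norm_tendsto_zero.1 ((hG.tendsto_sechIntegral hκ).comp hshift)
  have hpartial : Tendsto (fun N : ℕ ↦ ∑ k ∈ Finset.range N, (-1) ^ k * G k) atTop
      (𝓝 (sechIntegral G (-(1 / 2)) / 2)) := by
    have hlim := (htail.const_sub (sechIntegral G (-(1 / 2)))).div_const 2
    rw [sub_zero] at hlim
    refine hlim.congr fun N ↦ ?_
    linear_combination hG.sechIntegral_neg_one_half_eq hκ0 hκ hd N / 2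
  have hsum := (hG.summable (-1)).hasSum
  rwa [tendsto_nhds_unique hsum.tendsto_sum_nat hpartial] at hsum

theorem tsum_neg_pow_mul (hφ : SuperexponentialDecay κ φ) (hκ0 : 0 ≤ κ) (hκ : κ < π)
    (hd : Differentiable ℂ φ) {x : ℝ} (hx : 0 < x) :
    ∑' k : ℕ, (-x : ℂ) ^ k * φ k = sechIntegral (fun s ↦ (x : ℂ) ^ s * φ s) (-(1 / 2)) / 2 := by
  have hx0 : (x : ℂ) ≠ 0 := ofReal_ne_zero.2 hx.ne'
  have hG : Differentiable ℂ fun s ↦ (x : ℂ) ^ s * φ s := fun s ↦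
    (differentiableAt_id.const_cpow (.inl hx0)).mul (hd s)
  rw [← ((hφ.cpow_mul hx).hasSum_neg_one_pow_mul hκ0 hκ hG).tsum_eq]
  refine tsum_congr fun k ↦ ?_
  rw [cpow_natCast, ← mul_assoc, ← mul_pow, neg_one_mul]

theorem isBigO_tsum_neg_pow_mul (hφ : SuperexponentialDecay κ φ) (hκ0 : 0 ≤ κ) (hκ : κ < π)
    (hd : Differentiable ℂ φ) :
    (fun x : ℝ ↦ ∑' k : ℕ, (-x : ℂ) ^ k * φ k) =O[atTop] fun x ↦ x ^ (-(1 / 2) : ℝ) := by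
  obtain ⟨K, -, hK⟩ := hφ.exists_norm_le (-(1 / 2))
  set W := ∫ t : ℝ, Real.exp (κ * |t|) / Real.cosh (π * t)
  refine .of_bound (K * W / 2) ?_
  filter_upwards [eventually_gt_atTop 0] with x hx
  have hline : ‖sechIntegral (fun s ↦ (x : ℂ) ^ s * φ s) (-(1 / 2))‖ ≤
      x ^ (-(1 / 2) : ℝ) * K * W := norm_sechIntegral_le hκ fun t ↦ by
    have ht := hK ((-(1 / 2) : ℝ) + t * I) (by simp)
    rw [norm_mul, norm_cpow_eq_rpow_re_of_pos hx, mul_assoc]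
    simp only [add_re, ofReal_re, re_ofReal_mul, I_re, mul_zero, add_zero, add_im, ofReal_im,
      im_ofReal_mul, I_im, mul_one, zero_add] at ht ⊢
    gcongr
  rw [hφ.tsum_neg_pow_mul hκ0 hκ hd hx, norm_div, Real.norm_of_nonneg (by positivity),
    RCLike.norm_ofNat]
  linarith

end SuperexponentialDecay

/-- The two-parametric Mittag-Leffler function `E_{α,β}(z)`, with a complex second parameter. Since
`Gamma` vanishes at its poles, each coefficient is the value of the entire function `1 / Γ`. -/
noncomputable def mittagLeffler (α : ℝ) (β z : ℂ) : ℂ :=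
  ∑' k : ℕ, z ^ k / Gamma (α * k + β)

section MittagLeffler

variable {α : ℝ}

theorem summable_mittagLeffler (hα0 : 0 < α) (β z : ℂ) :
    Summable fun k : ℕ ↦ z ^ k / Gamma (α * k + β) :=
  ((superexponentialDecay_inv_Gamma (lt_add_one _)).comp_mul_add hα0 β).summable z

theorem mittagLeffler_eq_inv_Gamma_add (hα0 : 0 < α) (β z : ℂ) :
    mittagLeffler α β z = (Gamma β)⁻¹ + z * mittagLeffler α (β + α) z := by
  rw [mittagLeffler, (summable_mittagLeffler hα0 β z).tsum_eq_zero_add, mittagLeffler,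
    ← tsum_mul_left]
  congr 1
  · simp
  · refine tsum_congr fun k ↦ ?_
    push_cast
    ring_nf

theorem isBigO_mittagLeffler_neg (hα0 : 0 < α) (hα2 : α < 2) (β : ℂ) :
    (fun x : ℝ ↦ mittagLeffler α β (-x)) =O[atTop] fun x ↦ x ^ (-(1 / 2) : ℝ) := by
  obtain ⟨c, hc, hcα⟩ : ∃ c, π / 2 < c ∧ c < π / α :=
    exists_between (div_lt_div_of_pos_left Real.pi_pos hα0 hα2)
  have hc0 : 0 < c := Real.pi_div_two_pos.trans hc
  exact ((superexponentialDecay_inv_Gamma hc).comp_mul_add hα0 β).isBigO_tsum_neg_pow_mul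
    (by positivity) ((lt_div_iff₀ hα0).1 hcα)
    (differentiable_one_div_Gamma.comp (by fun_prop))

end MittagLeffler

theorem scaled_mittagLeffler_tendsto_one_general {α : ℝ} (hα0 : 0 < α) (hα2 : α < 2) (β : ℂ) :
    Tendsto (fun x : ℝ ↦ x * mittagLeffler α β (-x)) atTop (𝓝 (Gamma (β - α))⁻¹) := by
  have hdecay : Tendsto (fun x : ℝ ↦ mittagLeffler α (β - α) (-x)) atTop (𝓝 0) :=
    (isBigO_mittagLeffler_neg hα0 hα2 (β - α)).trans_tendsto
      (tendsto_rpow_neg_atTop one_half_pos)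
  have hlim := hdecay.const_sub (Gamma (β - α))⁻¹
  rw [sub_zero] at hlim
  refine hlim.congr fun x ↦ ?_
  rw [mittagLeffler_eq_inv_Gamma_add hα0, sub_add_cancel]
  ring

/-- For `0 < α < 2` and `β > α`, the scaled Mittag-Leffler function
`Γ(β-α)·x·E_{α,β}(-x)` tends to `1` as `x → ∞`. -/
theorem scaled_mittagLeffler_tendsto_one
    (α β : ℝ) (hα0 : 0 < α) (hα2 : α < 2) (hβ : α < β) :
    Filter.Tendsto
      (fun x : ℝ => Real.Gamma (β - α) * x * ∑' k : ℕ, (-x) ^ k / Real.Gamma (α * k + β))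
      Filter.atTop (nhds 1) := by
  have hG : (Gamma (β - α) : ℂ) ≠ 0 := by
    exact_mod_cast Gamma_ne_zero_of_re_pos (s := (β - α : ℝ)) (by simpa using hβ)
  have hlim := (scaled_mittagLeffler_tendsto_one_general hα0 hα2 β).const_mul (Gamma (β - α))
  rw [mul_inv_cancel₀ hG] at hlim
  rw [← Filter.tendsto_ofReal_iff, ofReal_one]
  refine hlim.congr fun x ↦ ?_
  rw [mittagLeffler]
  push_cast [← Gamma_ofReal]
  ring
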